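/- Let F = 𝔽_{2^m} with m ≥ 1 and let α₁, …, α_m ∈ F satisfy Tr(αᵢαⱼ) = 1 if i = j and Tr(αᵢαⱼ) = 0 if i ≠ j (a trace-orthogonal basis). Then Σ_{i=1}^m αᵢ = 1. -/

import Mathlib

open Finset

noncomputable section

noncomputable instance (m : ℕ) : Fintype (GaloisField 2 m) := Fintype.ofFinite _
noncomputable instance (m : ℕ) : DecidableEq (GaloisField 2 m) := Classical.decEq _

/-- The absolute trace map `Tr : 𝔽_{2^m} → 𝔽₂`. -/
def Ftr {m : ℕ} (x : GaloisField 2 m) : ZMod 2 :=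
  Algebra.trace (ZMod 2) (GaloisField 2 m) x

/-- Squaring preserves the absolute trace. -/
theorem Ftr_sq {m : ℕ} (x : GaloisField 2 m) : Ftr (x * x) = Ftr x := by
  have h := Algebra.trace_eq_of_algEquiv
    (FiniteField.frobeniusAlgEquivOfAlgebraic (ZMod 2) (GaloisField 2 m)) x
  simpa [Ftr, sq] using h

/-- A trace-orthonormal family is linearly independent over `𝔽₂`. -/
theorem linearIndependent_of_traceOrthogonal {ι : Type*} [Fintype ι] [DecidableEq ι] {m : ℕ}
    (α : ι → GaloisField 2 m)
    (hα : ∀ i j, Ftr (α i * α j) = if i = j then 1 else 0) :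
    LinearIndependent (ZMod 2) α := by
  rw [Fintype.linearIndependent_iff]
  intro g hg j
  have h := congrArg (fun x => Ftr (x * α j)) hg
  unfold Ftr at h hα
  simpa [Finset.sum_mul, map_sum, hα] using h

/-- The elements of a trace-orthogonal basis of `𝔽_{2^m}` over `𝔽₂` sum to `1`. -/
theorem sum_traceOrthogonal_eq_one {m : ℕ} (hm : 1 ≤ m)
    (α : Fin m → GaloisField 2 m)
    (hα : ∀ i j, Ftr (α i * α j) = if i = j then 1 else 0) :
    ∑ i, α i = 1 := by
  have hcard : Fintype.card (Fin m) = Module.finrank (ZMod 2) (GaloisField 2 m) := by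
    rw [Fintype.card_fin, GaloisField.finrank 2 (by omega)]
  have hspan := (linearIndependent_of_traceOrthogonal α hα).span_eq_top_of_card_eq_finrank' hcard
  rw [← sub_eq_zero]
  refine (traceForm_nondegenerate (ZMod 2) (GaloisField 2 m)).1 _ fun y => ?_
  suffices h : Algebra.traceForm (ZMod 2) (GaloisField 2 m) (∑ i, α i - 1) = 0 by
    rw [h, LinearMap.zero_apply]
  refine LinearMap.ext_on_range hspan fun j => ?_
  have hj : Ftr (α j) = 1 := by rw [← Ftr_sq, hα, if_pos rfl]
  unfold Ftr at hj hα
  simp [Algebra.traceForm_apply, hα, hj]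

end
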